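/- Let G be a connected graph of order n and let k, λ, m be positive integers with m ≤ min{k, λ} + 1. If σ_m ≥ n − λ(k − m + 1), then t_k ≥ t_{k+1} − λ + 1. (Corollary 3) -/

import Mathlib

open SimpleGraph

variable {V : Type*}

/-- A set of vertices is independent in `G`. -/
def IsIndSet (G : SimpleGraph V) (s : Set V) : Prop :=
  ∀ ⦃u⦄, u ∈ s → ∀ ⦃v⦄, v ∈ s → ¬ G.Adj u v

/-- The number of end-vertices (vertices of degree one) of a subgraph `H`. -/
noncomputable def endVertexCount {G : SimpleGraph V} (H : G.Subgraph) : ℕ :=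
  {v : V | v ∈ H.verts ∧ (H.neighborSet v).ncard = 1}.ncard

/-- `H` is a cycle; a single vertex and a single edge are regarded as
simple cycles of orders 1 and 2, respectively. -/
def IsCycleSubgraph {G : SimpleGraph V} (H : G.Subgraph) : Prop :=
  H.Connected ∧ (H.verts.ncard ≤ 2 ∨ ∀ v ∈ H.verts, (H.neighborSet v).ncard = 2)

/-- `H` is a `k`-ended tree in `G`: a tree with at most `k` end-vertices (leaves);
a cycle is regarded as a 1-ended tree. -/
def IsKEndedTree (G : SimpleGraph V) (k : ℕ) (H : G.Subgraph) : Prop :=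
  (H.coe.IsTree ∧ endVertexCount H ≤ k) ∨ (1 ≤ k ∧ IsCycleSubgraph H)

/-- `t k`: the order of a largest `k`-ended tree in `G`. -/
noncomputable def maxKEndedOrder (G : SimpleGraph V) (k : ℕ) : ℕ :=
  sSup {n | ∃ H : G.Subgraph, IsKEndedTree G k H ∧ H.verts.ncard = n}

/-- `σ m`: the minimum degree sum over independent sets of `m` vertices of `G`,
and `+∞` if the independence number of `G` is less than `m`. -/
noncomputable def minDegreeSum (G : SimpleGraph V) [Fintype V] [DecidableRel G.Adj]
    (m : ℕ) : ℕ∞ :=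
  ⨅ s ∈ {s : Finset V | s.card = m ∧ IsIndSet G ↑s}, (∑ v ∈ s, G.degree v : ℕ∞)

/-!
Suppose `t_{k+1} ≥ t_k + l`. A largest `(k+1)`-ended tree `T` is then critical: it has more vertices
than any `k`-ended tree, hence exactly `k + 1` leaves, which are independent in `G`. Deleting a leaf
of `T`, or exchanging an edge of `T` for an edge of `G` at a leaf, gives further critical trees, and
comparing leaves shows that near a leaf `T` has no branch vertex and no neighbour of another leaf.

Pick a set `S` of `m` leaves and `r ∈ S`. To a leaf `u ∈ S` and a neighbour `x` of `u` in `G`,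
assign an edge of the path of `T` from `x` to `u`: if `u` is number `i`, counted from `0`, among the
neighbours of `x` in `S` lying in the same direction from `x`, take the edge after `i` steps. To
each leaf outside `S`, assign the first `l` edges of its path to `r`. These edges are all different.
The inner vertices of the paths leading to them are neither leaves, nor branch vertices, nor
neighbours of `S`, so two paths that reach the same edge in the same direction start together. If
two paths from neighbours of `S` met head-on, then `m ≤ l + 1` would make their numbers `i` so small
that the part of `T` next to one leaf contains a neighbour of another. As `T` has fewer than `n`
edges, `σ_m + l (k + 1 - m) < n`.
-/

section Leaves

variable {T : SimpleGraph V} {v a b : V}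

/-- The end-vertices of `T`, as a set of vertices of the ambient graph. -/
def leaves (T : SimpleGraph V) : Set V := {v | ∃! w, T.Adj v w}

theorem mem_leaves_iff_ncard_neighborSet : v ∈ leaves T ↔ (T.neighborSet v).ncard = 1 := by
  simp only [Set.ncard_eq_one, Set.eq_singleton_iff_unique_mem]
  rfl

theorem eq_of_adj_of_mem_leaves (hv : v ∈ leaves T) (ha : T.Adj v a) (hb : T.Adj v b) : a = b :=
  hv.unique ha hb

theorem notMem_leaves_of_adj_of_adj (ha : T.Adj v a) (hb : T.Adj v b) (hab : a ≠ b) :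
    v ∉ leaves T :=
  fun hv ↦ hab (eq_of_adj_of_mem_leaves hv ha hb)

theorem exists_adj_ne_of_notMem_leaves (hv : v ∉ leaves T) (ha : T.Adj v a) :
    ∃ b, T.Adj v b ∧ b ≠ a := by
  by_contra! hne
  exact hv ⟨a, ha, hne⟩

theorem encard_neighborSet_of_mem_leaves (hv : v ∈ leaves T) : (T.neighborSet v).encard = 1 :=
  Set.encard_eq_one.2 (Set.ncard_eq_one.1 (mem_leaves_iff_ncard_neighborSet.1 hv))

theorem neighborSet_eq_pair (hv : (T.neighborSet v).encard ≤ 2) (ha : T.Adj v a) (hb : T.Adj v b)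
    (hab : a ≠ b) : T.neighborSet v = {a, b} :=
  ((Set.toFinite {a, b}).eq_of_subset_of_encard_le (Set.pair_subset ha hb)
    (by rwa [Set.encard_pair hab])).symm

theorem exists_two_adj_ne_of_two_lt_encard (hv : 2 < (T.neighborSet v).encard) (b : V) :
    ∃ c d, T.Adj v c ∧ T.Adj v d ∧ c ≠ b ∧ d ≠ b ∧ c ≠ d := by
  have one_lt : 1 < (T.neighborSet v \ {b}).encard := by
    by_contra! hle
    have := (Set.encard_le_encard_sdiff_add_encard (T.neighborSet v) {b}).trans
      (add_le_add hle (Set.encard_singleton b).le)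
    exact absurd (hv.trans_le this) (by norm_num)
  obtain ⟨c, d, hc, hd, hcd⟩ := Set.one_lt_encard_iff.1 one_lt
  exact ⟨c, d, hc.1, hd.1, hc.2, hd.2, hcd⟩

end Leaves

section TreeOn

variable {T T' : SimpleGraph V} {s : Set V} {a b : V}

/-- `T` is connected with vertex set `s`: this encodes a subgraph with fewer vertices as a graph on
the ambient vertex type, all of whose edges lie inside `s`. -/
structure IsConnectedOn (T : SimpleGraph V) (s : Set V) : Prop where
  mem : ∀ ⦃a b⦄, T.Adj a b → a ∈ s
  nonempty : s.Nonempty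
  reachable : ∀ ⦃a b⦄, a ∈ s → b ∈ s → T.Reachable a b

/-- `T` is a tree with vertex set `s`, encoded as in `IsConnectedOn`. -/
structure IsTreeOn (T : SimpleGraph V) (s : Set V) : Prop extends IsConnectedOn T s where
  acyclic : T.IsAcyclic

theorem reachable_of_forall_adj (hadj : ∀ ⦃c d⦄, T.Adj c d → T'.Reachable c d)
    (hab : T.Reachable a b) : T'.Reachable a b := by
  obtain ⟨p⟩ := hab
  induction p with
  | nil => rfl
  | cons hcd _ ih => exact (hadj hcd).trans ih

theorem exists_walk_length_le_of_forall_lt {p : ℕ → V} {n : ℕ}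
    (hp : ∀ i < n, p i = p (i + 1) ∨ T.Adj (p i) (p (i + 1))) :
    ∃ q : T.Walk (p 0) (p n), q.length ≤ n := by
  induction n with
  | zero => exact ⟨.nil, le_rfl⟩
  | succ n ih =>
    obtain ⟨q, hq⟩ := ih fun i hi ↦ hp i (by omega)
    rcases hp n n.lt_succ_self with heq | hadj
    · exact ⟨q.copy rfl heq, by simpa using hq.trans n.le_succ⟩
    · exact ⟨q.concat hadj, by simpa using hq⟩

namespace IsConnectedOn

theorem subset_of_closed (h : IsConnectedOn T s) {P : Set V} (ha : a ∈ s) (haP : a ∈ P)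
    (hP : ∀ x ∈ P, ∀ y, T.Adj x y → y ∈ P) : s ⊆ P := by
  intro b hb
  obtain ⟨p⟩ := h.reachable ha hb
  clear ha hb
  induction p with
  | nil => exact haP
  | cons hcd _ ih => exact ih (hP _ haP _ hcd)

theorem support_subset (h : IsConnectedOn T s) (p : T.Walk a b) (hb : b ∈ s) :
    ∀ x ∈ p.support, x ∈ s := by
  induction p with
  | nil => simpa using hb
  | cons hcd _ ih => simpa using ⟨h.mem hcd, ih hb⟩

end IsConnectedOn

namespace IsTreeOn

theorem leaves_subset (h : IsTreeOn T s) : leaves T ⊆ s :=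
  fun _ hv ↦ h.mem hv.exists.choose_spec

end IsTreeOn

end TreeOn

section Toward

variable {T T' : SimpleGraph V} {s : Set V} {u w a b c x : V}

open Classical in
/-- The neighbour of `x` in the tree `T` on the way to `u`; it is `x` itself when `x = u`. -/
noncomputable def toward (T : SimpleGraph V) (u x : V) : V :=
  if h : ∃ y, T.Adj x y ∧ T.dist u y + 1 = T.dist u x then h.choose else x

theorem toward_self (T : SimpleGraph V) (u : V) : toward T u u = u := by
  simp [toward]

namespace IsTreeOn

theorem exists_adj_dist_lt (h : IsTreeOn T s) (hu : u ∈ s) (hx : x ∈ s) (hne : x ≠ u) :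
    ∃ y, T.Adj x y ∧ T.dist u y + 1 = T.dist u x := by
  obtain ⟨p, hp⟩ := (h.reachable hu hx).exists_walk_length_eq_dist
  have hnil : ¬ p.Nil := Walk.not_nil_of_ne hne.symm
  refine ⟨p.penultimate, (p.adj_penultimate hnil).symm, ?_⟩
  have hlt : T.dist u p.penultimate + 1 ≤ T.dist u x := by
    have := dist_le p.dropLast
    have := p.length_dropLast_add_one hnil
    omega
  rcases h.acyclic.dist_eq_dist_add_one_of_adj_of_reachable u (p.adj_penultimate hnil)
    (h.reachable hu (h.mem (p.adj_penultimate hnil))) with hd | hd <;> omega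

theorem adj_toward (h : IsTreeOn T s) (hu : u ∈ s) (hx : x ∈ s) (hne : x ≠ u) :
    T.Adj x (toward T u x) := by
  have hex := h.exists_adj_dist_lt hu hx hne
  rw [toward, dif_pos hex]
  exact hex.choose_spec.1

theorem dist_toward_add_one (h : IsTreeOn T s) (hu : u ∈ s) (hx : x ∈ s) (hne : x ≠ u) :
    T.dist u (toward T u x) + 1 = T.dist u x := by
  have hex := h.exists_adj_dist_lt hu hx hne
  rw [toward, dif_pos hex]
  exact hex.choose_spec.2

theorem eq_penultimate (h : IsTreeOn T s) (hu : u ∈ s) (hab : T.Adj a b)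
    (hd : T.dist u b + 1 = T.dist u a) {p : T.Walk u a} (hp : p.IsPath) : b = p.penultimate := by
  classical
  obtain ⟨q, hq, hql⟩ := (h.reachable hu (h.mem hab.symm)).exists_path_of_dist
  have ha : a ∉ q.support := by
    intro ha
    have := dist_le (q.takeUntil a ha)
    have := q.length_takeUntil_le_length ha
    omega
  exact h.acyclic.eq_penultimate_of_adj_end hp hab
    (h.acyclic.mem_support_of_ne_mem_support_of_adj_of_isPath hp hq hab ha)

theorem toward_eq (h : IsTreeOn T s) (hu : u ∈ s) (hab : T.Adj a b)
    (hd : T.dist u b + 1 = T.dist u a) : toward T u a = b := by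
  have hne : a ≠ u := by rintro rfl; simp at hd
  have ha := h.mem hab
  obtain ⟨p, hp, -⟩ := (h.reachable hu ha).exists_path_of_dist
  rw [h.eq_penultimate hu hab hd hp, h.eq_penultimate hu (h.adj_toward hu ha hne)
    (h.dist_toward_add_one hu ha hne) hp]

theorem toward_eq_or (h : IsTreeOn T s) (hu : u ∈ s) (hab : T.Adj a b) :
    toward T u a = b ∨ toward T u b = a := by
  rcases h.acyclic.dist_eq_dist_add_one_of_adj_of_reachable u hab (h.reachable hu (h.mem hab))
    with hd | hd
  · exact .inl (h.toward_eq hu hab hd.symm)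
  · exact .inr (h.toward_eq hu hab.symm hd.symm)

theorem toward_ne (h : IsTreeOn T s) (hu : u ∈ s) (hab : T.Adj a b) (he : toward T u a = b) :
    toward T u b ≠ a := by
  have dist_lt : ∀ {a b}, T.Adj a b → toward T u a = b → T.dist u b < T.dist u a := by
    rintro a b hab rfl
    have hne : a ≠ u := by rintro rfl; rw [toward_self] at hab; exact hab.ne rfl
    have := h.dist_toward_add_one hu (h.mem hab) hne
    omega
  exact fun he' ↦ (dist_lt hab he).not_gt (dist_lt hab.symm he')

theorem toward_mem (h : IsTreeOn T s) (hu : u ∈ s) (hx : x ∈ s) : toward T u x ∈ s := by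
  rcases eq_or_ne x u with rfl | hne
  · rwa [toward_self]
  · exact h.mem (h.adj_toward hu hx hne).symm

theorem exists_walk_of_toward (h : IsTreeOn T s) {A : Set V} (hb : b ∈ s) (hA : A ⊆ s)
    (hT' : ∀ x ∈ A, x ≠ b → T'.Adj x (toward T b x) ∧ toward T b x ∈ A) (hx : x ∈ A) :
    ∃ p : T'.Walk x b, p.length = T.dist b x := by
  obtain ⟨n, hn⟩ : ∃ n, T.dist b x = n := ⟨_, rfl⟩
  induction n generalizing x with
  | zero =>
    obtain rfl : b = x := (h.reachable hb (hA hx)).dist_eq_zero_iff.1 hn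
    exact ⟨.nil, hn.symm⟩
  | succ n ih =>
    have hne : x ≠ b := by rintro rfl; simp at hn
    have := h.dist_toward_add_one hb (hA hx) hne
    obtain ⟨p, hp⟩ := ih (hT' x hx hne).2 (by omega)
    exact ⟨.cons (hT' x hx hne).1 p, by simp; omega⟩

theorem reachable_deleteEdges (h : IsTreeOn T s) (hu : u ∈ s) (hab : T.Adj a b)
    (he : toward T u a = b) : (T.deleteEdges {s(a, b)}).Reachable b u := by
  have ha : a ∈ s := h.mem hab
  have hau : a ≠ u := by rintro rfl; rw [toward_self] at he; exact hab.ne he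
  have hd := h.dist_toward_add_one hu ha hau
  have step : ∀ z ∈ {z | z ∈ s ∧ T.dist u z < T.dist u a}, z ≠ u →
      (T.deleteEdges {s(a, b)}).Adj z (toward T u z) ∧
        toward T u z ∈ {z | z ∈ s ∧ T.dist u z < T.dist u a} := by
    rintro z ⟨hz, hlt⟩ hzu
    have hdz := h.dist_toward_add_one hu hz hzu
    have hza : z ≠ a := by rintro rfl; omega
    have hza' : toward T u z ≠ a := by intro hza'; rw [hza'] at hdz; omega
    refine ⟨?_, h.toward_mem hu hz, by omega⟩
    simpa [deleteEdges_adj, hza, hza'] using h.adj_toward hu hz hzu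
  obtain ⟨p, -⟩ := h.exists_walk_of_toward hu (fun z hz ↦ hz.1) step
    ⟨h.mem hab.symm, by rw [← he]; omega⟩
  exact ⟨p⟩

theorem toward_ne_of_mem_leaves (h : IsTreeOn T s) (hu : u ∈ leaves T) (hb : b ∈ s) (hbu : b ≠ u)
    (ha : a ∈ s) : toward T b a ≠ u := by
  intro he
  rcases eq_or_ne a b with rfl | hab
  · exact hbu ((toward_self T a).symm.trans he)
  · have hadj : T.Adj u a := by simpa [he] using (h.adj_toward hb ha hab).symm
    refine h.toward_ne hb hadj.symm he ?_
    exact eq_of_adj_of_mem_leaves hu (h.adj_toward hb (h.leaves_subset hu) hbu.symm) hadj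

theorem toward_pass (h : IsTreeOn T s) (hw : w ∈ s) (hb : (T.neighborSet b).encard ≤ 2)
    (hab : T.Adj a b) (hbc : T.Adj b c) (hac : a ≠ c) (hbw : b ≠ w) (he : toward T w a = b) :
    toward T w b = c := by
  have hmem : toward T w b ∈ T.neighborSet b := h.adj_toward hw (h.mem hbc) hbw
  rw [neighborSet_eq_pair hb hab.symm hbc hac] at hmem
  exact hmem.resolve_left (h.toward_ne hw hab he)

theorem ncard_edgeSet_add_one_le (h : IsTreeOn T s) (hs : s.Finite) :
    T.edgeSet.ncard + 1 ≤ s.ncard := by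
  obtain ⟨r, hr⟩ := h.nonempty
  have subset_image : T.edgeSet ⊆ (fun z ↦ s(z, toward T r z)) '' (s \ {r}) := by
    have mem_image : ∀ {a b}, T.Adj a b → toward T r a = b →
        s(a, b) ∈ (fun z ↦ s(z, toward T r z)) '' (s \ {r}) := by
      rintro a b hab rfl
      refine ⟨a, ⟨h.mem hab, ?_⟩, rfl⟩
      rintro rfl
      exact hab.ne (toward_self T a).symm
    intro e
    induction e with | _ a b => ?_
    intro hab
    rcases h.toward_eq_or hr hab with he | he
    · exact mem_image hab he
    · rw [Sym2.eq_swap]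
      exact mem_image hab.symm he
  have := Set.ncard_le_ncard subset_image (hs.sdiff.image _)
  have := Set.ncard_image_le (f := fun z ↦ s(z, toward T r z)) (hs.sdiff (t := {r}))
  have := Set.ncard_sdiff_singleton_add_one hr hs
  omega

end IsTreeOn

end Toward

section PathTo

variable {T : SimpleGraph V} {s : Set V} {u u' w x x' : V} {d m n : ℕ}

/-- The vertex reached from `x` after `n` steps along the path of `T` to `u`; the path stays at `u`
once it gets there. -/
noncomputable def pathTo (T : SimpleGraph V) (x u : V) (n : ℕ) : V := (toward T u)^[n] x

theorem pathTo_zero (T : SimpleGraph V) (x u : V) : pathTo T x u 0 = x := rfl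

theorem pathTo_succ (T : SimpleGraph V) (x u : V) (n : ℕ) :
    pathTo T x u (n + 1) = toward T u (pathTo T x u n) :=
  Function.iterate_succ_apply' ..

theorem pathTo_ne_of_le (hmn : m ≤ n) (hn : pathTo T x u n ≠ u) : pathTo T x u m ≠ u := by
  induction n, hmn using Nat.le_induction with
  | base => exact hn
  | succ n _ ih =>
    refine ih fun he ↦ hn ?_
    rw [pathTo_succ, he, toward_self]

theorem pathTo_eq_pathTo (h : ∀ i < n, toward T w (pathTo T x u i) = pathTo T x u (i + 1)) :
    pathTo T x w n = pathTo T x u n := by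
  induction n with
  | zero => rfl
  | succ n ih => rw [pathTo_succ, ih fun i hi ↦ h i (by omega), h n n.lt_succ_self]

namespace IsTreeOn

theorem pathTo_mem (h : IsTreeOn T s) (hu : u ∈ s) (hx : x ∈ s) (n : ℕ) : pathTo T x u n ∈ s := by
  induction n with
  | zero => exact hx
  | succ n ih => exact pathTo_succ T x u n ▸ h.toward_mem hu ih

theorem adj_pathTo (h : IsTreeOn T s) (hu : u ∈ s) (hx : x ∈ s) (hn : pathTo T x u n ≠ u) :
    T.Adj (pathTo T x u n) (pathTo T x u (n + 1)) :=
  pathTo_succ T x u n ▸ h.adj_toward hu (h.pathTo_mem hu hx n) hn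

theorem pathTo_add_two_ne (h : IsTreeOn T s) (hu : u ∈ s) (hx : x ∈ s)
    (hn : pathTo T x u n ≠ u) : pathTo T x u (n + 2) ≠ pathTo T x u n :=
  pathTo_succ T x u (n + 1) ▸ h.toward_ne hu (h.adj_pathTo hu hx hn) (pathTo_succ T x u n).symm

theorem pathTo_succ_notMem_leaves (h : IsTreeOn T s) (hu : u ∈ s) (hx : x ∈ s)
    (hn : pathTo T x u (n + 1) ≠ u) : pathTo T x u (n + 1) ∉ leaves T :=
  have hn' := pathTo_ne_of_le n.le_succ hn
  notMem_leaves_of_adj_of_adj (h.adj_pathTo hu hx hn) (h.adj_pathTo hu hx hn').symm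
    (h.pathTo_add_two_ne hu hx hn')

theorem dist_pathTo_add (h : IsTreeOn T s) (hu : u ∈ s) (hx : x ∈ s) (hn : pathTo T x u n ≠ u) :
    T.dist u (pathTo T x u n) + n = T.dist u x := by
  induction n with
  | zero => rfl
  | succ n ih =>
    have hn' := pathTo_ne_of_le n.le_succ hn
    have := h.dist_toward_add_one hu (h.pathTo_mem hu hx n) hn'
    rw [← pathTo_succ] at this
    have := ih hn'
    omega

theorem pathTo_succ_ne_start (h : IsTreeOn T s) (hu : u ∈ s) (hx : x ∈ s) (hxu : x ≠ u) :
    pathTo T x u (n + 1) ≠ x := by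
  intro he
  have := h.dist_pathTo_add hu hx (he.symm ▸ hxu)
  rw [he] at this
  omega

theorem dist_start_pathTo_le (h : IsTreeOn T s) (hu : u ∈ s) (hx : x ∈ s) (n : ℕ) :
    T.dist x (pathTo T x u n) ≤ n := by
  obtain ⟨p, hp⟩ := exists_walk_length_le_of_forall_lt (T := T) (p := pathTo T x u) (n := n)
    fun i _ ↦ or_iff_not_imp_left.2 fun hne ↦ h.adj_pathTo hu hx fun he ↦
      hne (by rw [pathTo_succ, he, toward_self])
  exact (dist_le p).trans hp

theorem toward_start_pathTo_succ (h : IsTreeOn T s) (hu : u ∈ s) (hx : x ∈ s)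
    (hn : pathTo T x u n ≠ u) : toward T x (pathTo T x u (n + 1)) = pathTo T x u n := by
  induction n with
  | zero =>
    have hadj : T.Adj x (pathTo T x u 1) := h.adj_pathTo hu hx hn
    refine h.toward_eq hx hadj.symm ?_
    simp only [pathTo_zero, Nat.zero_add, dist_self, dist_eq_one_iff_adj.2 hadj]
  | succ n ih =>
    have hn' := pathTo_ne_of_le n.le_succ hn
    refine (h.toward_eq_or hx (h.adj_pathTo hu hx hn)).resolve_left fun he ↦ ?_
    exact h.pathTo_add_two_ne hu hx hn' (he.symm.trans (ih hn'))

theorem neighborSet_pathTo_succ (h : IsTreeOn T s) (hu : u ∈ s) (hx : x ∈ s)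
    (hdeg : (T.neighborSet (pathTo T x u (n + 1))).encard ≤ 2) (hn : pathTo T x u (n + 1) ≠ u) :
    T.neighborSet (pathTo T x u (n + 1)) = {pathTo T x u n, pathTo T x u (n + 2)} :=
  have hn' := pathTo_ne_of_le n.le_succ hn
  neighborSet_eq_pair hdeg (h.adj_pathTo hu hx hn').symm (h.adj_pathTo hu hx hn)
    (h.pathTo_add_two_ne hu hx hn').symm

/-- Two paths that share a directed edge can be traced back together through vertices of degree at
most two, until one of them starts. -/
theorem pathTo_backtrack (h : IsTreeOn T s) (hu : u ∈ s) (hx : x ∈ s) (hu' : u' ∈ s) (hx' : x' ∈ s)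
    (hm : pathTo T x u m = pathTo T x' u' (m + d))
    (hm' : pathTo T x u (m + 1) = pathTo T x' u' (m + d + 1))
    (hdeg : ∀ i < m, (T.neighborSet (pathTo T x u (i + 1))).encard ≤ 2)
    (hne : pathTo T x u m ≠ u) (hne' : pathTo T x' u' (m + d) ≠ u') :
    x = pathTo T x' u' d ∧ pathTo T x u 1 = pathTo T x' u' (d + 1) := by
  induction m with
  | zero => simpa only [Nat.zero_add, pathTo_zero] using And.intro hm hm'
  | succ m ih =>
    rw [show m + 1 + d = m + d + 1 by omega] at hm hm' hne'
    have hprev' := pathTo_ne_of_le (m + d).le_succ hne'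
    have prev_eq : pathTo T x' u' (m + d) = pathTo T x u m := by
      have hmem : pathTo T x' u' (m + d) ∈ T.neighborSet (pathTo T x u (m + 1)) :=
        hm ▸ (h.adj_pathTo hu' hx' hprev').symm
      rw [h.neighborSet_pathTo_succ hu hx (hdeg m m.lt_succ_self) hne, hm'] at hmem
      exact hmem.resolve_right (h.pathTo_add_two_ne hu' hx' hprev').symm
    exact ih prev_eq.symm hm (fun i hi ↦ hdeg i (by omega)) (pathTo_ne_of_le m.le_succ hne) hprev'

/-- Two paths that share an edge in opposite directions retrace each other through vertices of
degree at most two, so that the first one reaches the start of the second. -/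
theorem pathTo_retrace (h : IsTreeOn T s) (hu : u ∈ leaves T) (hx : x ∈ s) (hu' : u' ∈ s)
    (hx' : x' ∈ s) (hm : pathTo T x u n = pathTo T x' u' (m + 1))
    (hm' : pathTo T x u (n + 1) = pathTo T x' u' m)
    (hdeg : ∀ i < m, (T.neighborSet (pathTo T x u (n + i + 1))).encard ≤ 2)
    (hne' : pathTo T x' u' m ≠ u') : pathTo T x u (n + m + 1) = x' := by
  induction m generalizing n with
  | zero => exact hm'
  | succ m ih =>
    have hprev' := pathTo_ne_of_le m.le_succ hne'
    have hadj : T.Adj (pathTo T x u (n + 1)) (pathTo T x' u' m) :=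
      hm' ▸ (h.adj_pathTo hu' hx' hprev').symm
    have hadj' : T.Adj (pathTo T x u (n + 1)) (pathTo T x u n) := by
      rw [hm', hm]; exact h.adj_pathTo hu' hx' hne'
    have hback : pathTo T x' u' m ≠ pathTo T x u n := by
      rw [hm]; exact (h.pathTo_add_two_ne hu' hx' hprev').symm
    have hne : pathTo T x u (n + 1) ≠ u := fun he ↦
      notMem_leaves_of_adj_of_adj hadj hadj' hback (by rwa [he])
    have next_eq : pathTo T x u (n + 1 + 1) = pathTo T x' u' m := by
      have hmem : pathTo T x' u' m ∈ T.neighborSet (pathTo T x u (n + 1)) := hadj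
      rw [h.neighborSet_pathTo_succ (h.leaves_subset hu) hx (hdeg 0 m.succ_pos) hne] at hmem
      exact (hmem.resolve_left hback).symm
    rw [show n + (m + 1) + 1 = n + 1 + m + 1 by omega]
    refine ih hm' next_eq (fun i hi ↦ ?_) hprev'
    rw [show n + 1 + i + 1 = n + (i + 1) + 1 by omega]
    exact hdeg (i + 1) (by omega)

/-- Vertices of degree at most two do not separate the leaves `u` and `w` as seen from `x`. -/
theorem toward_pathTo_eq (h : IsTreeOn T s) (hu : u ∈ leaves T) (hw : w ∈ leaves T) (huw : u ≠ w)
    (hx : x ∈ s) (hxu : x ≠ u) (he : toward T w x = toward T u x)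
    (hdeg : ∀ i < n, (T.neighborSet (pathTo T x u (i + 1))).encard ≤ 2) :
    pathTo T x u n ≠ u ∧ toward T w (pathTo T x u n) = pathTo T x u (n + 1) := by
  have hus := h.leaves_subset hu
  have hws := h.leaves_subset hw
  induction n with
  | zero => exact ⟨hxu, he⟩
  | succ n ih =>
    obtain ⟨hnu, hn⟩ := ih fun i hi ↦ hdeg i (by omega)
    have hmem := h.pathTo_mem hus hx n
    have ne_u : pathTo T x u (n + 1) ≠ u := hn ▸ h.toward_ne_of_mem_leaves hu hws huw.symm hmem
    have ne_w : pathTo T x u (n + 1) ≠ w :=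
      pathTo_succ T x u n ▸ h.toward_ne_of_mem_leaves hw hus huw hmem
    exact ⟨ne_u, h.toward_pass hws (hdeg n n.lt_succ_self) (h.adj_pathTo hus hx hnu)
      (h.adj_pathTo hus hx ne_u) (h.pathTo_add_two_ne hus hx hnu).symm ne_w hn⟩

end IsTreeOn

end PathTo

section Surgery

variable {T : SimpleGraph V} {s : Set V} {u v w a b x y : V}

/-- The graph obtained from `T` by replacing the edge `ab` with the edge `uv`. -/
def exchangeEdge (T : SimpleGraph V) (a b u v : V) : SimpleGraph V :=
  T.deleteEdges {s(a, b)} ⊔ edge u v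

theorem exchangeEdge_adj : (exchangeEdge T a b u v).Adj x y ↔
    T.Adj x y ∧ s(x, y) ≠ s(a, b) ∨ s(x, y) = s(u, v) ∧ x ≠ y := by
  simp [exchangeEdge, deleteEdges_adj, edge_adj]

theorem exchangeEdge_le {G : SimpleGraph V} (hle : T ≤ G) (huv : G.Adj u v) :
    exchangeEdge T a b u v ≤ G :=
  sup_le ((deleteEdges_le _).trans hle) ((edge_le_iff _).2 (.inr huv))

theorem leaves_exchangeEdge_subset (hu : u ∈ leaves T) (huv : u ≠ v) (hnuv : ¬ T.Adj u v)
    (ha : a ∈ leaves (exchangeEdge T a b u v) → a ∈ leaves T \ {u})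
    (hv : v ∈ leaves (exchangeEdge T a b u v) → v ∈ leaves T \ {u}) :
    leaves (exchangeEdge T a b u v) ⊆ insert b (leaves T \ {u}) := by
  intro z hz
  by_cases hzb : z = b
  · exact .inl hzb
  by_cases hza : z = a
  · exact .inr (hza ▸ ha (hza ▸ hz))
  by_cases hzv : z = v
  · exact .inr (hzv ▸ hv (hzv ▸ hz))
  have adj_of_adj : ∀ {y}, T.Adj z y → (exchangeEdge T a b u v).Adj z y := fun hzy ↦
    exchangeEdge_adj.2 (.inl ⟨hzy, by simp [hza, hzb]⟩)
  have hzu : z ≠ u := by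
    rintro rfl
    obtain ⟨y, hzy, -⟩ := hu
    refine notMem_leaves_of_adj_of_adj (adj_of_adj hzy) (exchangeEdge_adj.2 (.inr ⟨rfl, huv⟩)) ?_ hz
    exact fun hyv ↦ hnuv (hyv ▸ hzy)
  obtain ⟨y, hzy, hy⟩ := hz
  have hzy' : T.Adj z y := (exchangeEdge_adj.1 hzy).elim And.left fun he ↦ by
    simp [hzu, hzv] at he
  exact .inr ⟨⟨y, hzy', fun c hc ↦ hy c (adj_of_adj hc)⟩, hzu⟩

theorem adj_of_deleteIncidenceSet_adj (hxy : (T.deleteIncidenceSet u).Adj x y) : T.Adj x y :=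
  T.deleteIncidenceSet_le u hxy

theorem leaves_deleteIncidenceSet_subset (hu : u ∈ leaves T) (huw : T.Adj u w) :
    leaves (T.deleteIncidenceSet u) ⊆ insert w (leaves T \ {u}) := by
  rintro z ⟨y, hzy, hy⟩
  obtain ⟨hzy, hzu, -⟩ := deleteIncidenceSet_adj.1 hzy
  by_cases hzw : z = w
  · exact .inl hzw
  refine .inr ⟨⟨y, hzy, fun c hc ↦ hy c (deleteIncidenceSet_adj.2 ⟨hc, hzu, ?_⟩)⟩, hzu⟩
  rintro rfl
  exact hzw (eq_of_adj_of_mem_leaves hu hc.symm huw)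

theorem leaves_sup_edge_subset (hu : u ∈ leaves T) (huv : u ≠ v) (hnuv : ¬ T.Adj u v) :
    leaves (T ⊔ edge u v) ⊆ insert v (leaves T \ {u}) := by
  have huv' : (T ⊔ edge u v).Adj u v := by simp [edge_adj, huv]
  intro z hz
  by_cases hzv : z = v
  · exact .inl hzv
  have hzu : z ≠ u := by
    rintro rfl
    obtain ⟨y, hzy, -⟩ := hu
    exact notMem_leaves_of_adj_of_adj (Or.inl hzy) huv' (fun hyv ↦ hnuv (hyv ▸ hzy)) hz
  obtain ⟨y, hzy, hy⟩ := hz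
  have hzy' : T.Adj z y := hzy.resolve_right (by simp [edge_adj, hzu, hzv])
  exact .inr ⟨⟨y, hzy', fun c hc ↦ hy c (Or.inl hc)⟩, hzu⟩

namespace IsTreeOn

theorem isTreeOn_exchangeEdge (h : IsTreeOn T s) (hu : u ∈ s) (hv : v ∈ s) (hab : T.Adj a b)
    (hbu : (T.deleteEdges {s(a, b)}).Reachable b u)
    (hav : (T.deleteEdges {s(a, b)}).Reachable a v) : IsTreeOn (exchangeEdge T a b u v) s := by
  have hnuv : ¬ (T.deleteEdges {s(a, b)}).Reachable u v := fun huv ↦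
    isAcyclic_iff_forall_adj_isBridge.1 h.acyclic hab (hav.trans (huv.symm.trans hbu.symm))
  have huv : u ≠ v := by rintro rfl; exact hnuv .rfl
  have hle : T.deleteEdges {s(a, b)} ≤ exchangeEdge T a b u v := le_sup_left
  have reachable_vu : (exchangeEdge T a b u v).Reachable v u :=
    Adj.reachable (exchangeEdge_adj.2 (.inr ⟨Sym2.eq_swap, huv.symm⟩))
  have reachable_ab : (exchangeEdge T a b u v).Reachable a b :=
    (hav.mono hle).trans (.trans reachable_vu (hbu.mono hle).symm)
  refine ⟨⟨fun x y hxy ↦ ?_, h.nonempty, fun x y hx hy ↦ ?_⟩,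
    (h.acyclic.anti (deleteEdges_le _)).sup_edge_of_not_reachable hnuv⟩
  · rcases exchangeEdge_adj.1 hxy with ⟨hxy, -⟩ | ⟨he, -⟩
    · exact h.mem hxy
    · rcases Sym2.eq_iff.1 he with ⟨rfl, -⟩ | ⟨rfl, -⟩ <;> assumption
  · refine reachable_of_forall_adj (fun c d hcd ↦ ?_) (h.reachable hx hy)
    by_cases he : s(c, d) = s(a, b)
    · rcases Sym2.eq_iff.1 he with ⟨rfl, rfl⟩ | ⟨rfl, rfl⟩
      exacts [reachable_ab, reachable_ab.symm]
    · exact (exchangeEdge_adj.2 (.inl ⟨hcd, he⟩)).reachable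

theorem exists_walk_deleteIncidenceSet (h : IsTreeOn T s) (hu : u ∈ leaves T) (ha : a ∈ s \ {u})
    (hb : b ∈ s \ {u}) : ∃ p : (T.deleteIncidenceSet u).Walk a b, p.length = T.dist b a := by
  refine h.exists_walk_of_toward hb.1 Set.sdiff_subset (fun x hx hxb ↦ ?_) ha
  have hne := h.toward_ne_of_mem_leaves hu hb.1 hb.2 hx.1
  exact ⟨deleteIncidenceSet_adj.2 ⟨h.adj_toward hb.1 hx.1 hxb, hx.2, hne⟩,
    h.toward_mem hb.1 hx.1, hne⟩

theorem isTreeOn_deleteIncidenceSet (h : IsTreeOn T s) (hu : u ∈ leaves T) :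
    IsTreeOn (T.deleteIncidenceSet u) (s \ {u}) where
  mem _ _ hab := ⟨h.mem (adj_of_deleteIncidenceSet_adj hab), (deleteIncidenceSet_adj.1 hab).2.1⟩
  nonempty :=
    have ⟨_, huw, _⟩ := hu
    ⟨_, h.mem huw.symm, huw.ne'⟩
  reachable _ _ ha hb := ⟨(h.exists_walk_deleteIncidenceSet hu ha hb).choose⟩
  acyclic := h.acyclic.anti (T.deleteIncidenceSet_le u)

theorem dist_deleteIncidenceSet_le (h : IsTreeOn T s) (hu : u ∈ leaves T) (ha : a ∈ s \ {u})
    (hb : b ∈ s \ {u}) : (T.deleteIncidenceSet u).dist b a ≤ T.dist b a := by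
  obtain ⟨p, hp⟩ := h.exists_walk_deleteIncidenceSet hu ha hb
  exact hp ▸ dist_comm (G := T.deleteIncidenceSet u) ▸ dist_le p

theorem isTreeOn_sup_edge (h : IsTreeOn T s) (hu : u ∈ s) (hv : v ∉ s) :
    IsTreeOn (T ⊔ edge u v) (insert v s) := by
  have huv : u ≠ v := by rintro rfl; exact hv hu
  have hnuv : ¬ T.Reachable u v := fun ⟨p⟩ ↦
    hv (h.mem (p.adj_penultimate (Walk.not_nil_of_ne huv)).symm)
  have huv' : (T ⊔ edge u v).Adj u v := by simp [edge_adj, huv]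
  have reachable_u : ∀ x ∈ insert v s, (T ⊔ edge u v).Reachable x u := by
    rintro x (rfl | hx)
    · exact huv'.reachable.symm
    · exact (h.reachable hx hu).mono le_sup_left
  refine ⟨⟨?_, Set.insert_nonempty _ _, fun a b ha hb ↦ (reachable_u a ha).trans
    (reachable_u b hb).symm⟩, h.acyclic.sup_edge_of_not_reachable hnuv⟩
  rintro x y (hxy | hxy)
  · exact .inr (h.mem hxy)
  · rcases (edge_adj ..).1 hxy with ⟨⟨rfl, -⟩ | ⟨rfl, -⟩, -⟩
    exacts [.inr hu, .inl rfl]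

end IsTreeOn

end Surgery

section Subgraph

variable {G T : SimpleGraph V} {s : Set V} {k : ℕ}

/-- A graph `T ≤ G` that is connected on `s`, as a subgraph of `G`. -/
def IsConnectedOn.subgraph (h : IsConnectedOn T s) (hle : T ≤ G) : G.Subgraph where
  verts := s
  Adj := T.Adj
  adj_sub hab := hle hab
  edge_vert hab := h.mem hab
  symm := T.symm

theorem IsConnectedOn.subgraph_connected (h : IsConnectedOn T s) (hle : T ≤ G) :
    (h.subgraph hle).Connected := by
  refine ⟨@Connected.mk _ _ ?_ h.nonempty.to_subtype⟩
  rintro ⟨a, ha⟩ ⟨b, hb⟩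
  obtain ⟨p⟩ := h.reachable ha hb
  exact ⟨p.induce s (h.support_subset p hb)⟩

theorem isTreeOn_spanningCoe {H : G.Subgraph} (hH : H.coe.IsTree) :
    IsTreeOn H.spanningCoe H.verts := by
  have h : IsConnectedOn H.spanningCoe H.verts :=
    ⟨fun a b hab ↦ H.edge_vert hab, Set.nonempty_coe_sort.1 hH.connected.nonempty, fun a b ha hb ↦
      (hH.connected.preconnected ⟨a, ha⟩ ⟨b, hb⟩).map
        (⟨Subtype.val, fun hab ↦ hab⟩ : H.coe →g H.spanningCoe)⟩
  refine ⟨h, fun v c hc ↦ ?_⟩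
  have hv : v ∈ H.verts := h.mem (c.adj_snd hc.not_nil)
  have hc' : (c.induce H.verts (h.support_subset c hv)).IsCycle :=
    (Walk.isCycle_map_iff_of_injective (f := (Embedding.induce _).toHom)
      Subtype.val_injective).1 (by rwa [Walk.map_induce])
  exact hH.isAcyclic _ hc'

theorem endVertexCount_eq_ncard_leaves (H : G.Subgraph) :
    endVertexCount H = (leaves H.spanningCoe).ncard := by
  refine congrArg Set.ncard (Set.ext fun v ↦ ?_)
  rw [mem_leaves_iff_ncard_neighborSet]
  refine and_iff_right_of_imp fun hv ↦ ?_
  obtain ⟨w, hw⟩ := Set.nonempty_of_ncard_ne_zero (hv.trans_ne one_ne_zero)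
  exact H.edge_vert hw

variable [Finite V]

theorem IsKEndedTree.ncard_verts_le {H : G.Subgraph} (hH : IsKEndedTree G k H) :
    H.verts.ncard ≤ maxKEndedOrder G k := by
  refine le_csSup ⟨Nat.card V, ?_⟩ ⟨H, hH, rfl⟩
  rintro _ ⟨H', _, rfl⟩
  exact Set.ncard_le_card _

theorem exists_isKEndedTree_ncard_eq (hpos : 0 < maxKEndedOrder G k) :
    ∃ H : G.Subgraph, IsKEndedTree G k H ∧ H.verts.ncard = maxKEndedOrder G k := by
  refine Nat.sSup_mem (s := {n | ∃ H : G.Subgraph, IsKEndedTree G k H ∧ H.verts.ncard = n})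
    (Set.nonempty_iff_ne_empty.2 fun he ↦ by simp [maxKEndedOrder, he] at hpos)
    ⟨maxKEndedOrder G k, ?_⟩
  rintro _ ⟨H, hH, rfl⟩
  exact hH.ncard_verts_le

theorem IsTreeOn.ncard_le_maxKEndedOrder (h : IsTreeOn T s) (hle : T ≤ G)
    (hk : (leaves T).ncard ≤ k) : s.ncard ≤ maxKEndedOrder G k :=
  IsKEndedTree.ncard_verts_le (H := h.subgraph hle) <| .inl
    ⟨⟨(h.subgraph_connected hle).coe, h.acyclic.induce s⟩,
      (endVertexCount_eq_ncard_leaves (h.subgraph hle)).trans_le hk⟩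

theorem IsConnectedOn.ncard_le_maxKEndedOrder_of_cycle (h : IsConnectedOn T s) (hle : T ≤ G)
    (hk : 1 ≤ k) (hc : s.ncard ≤ 2 ∨ ∀ v ∈ s, (T.neighborSet v).ncard = 2) :
    s.ncard ≤ maxKEndedOrder G k :=
  IsKEndedTree.ncard_verts_le (H := h.subgraph hle) <| .inr ⟨hk, h.subgraph_connected hle, hc⟩

end Subgraph

section Critical

variable {G T T' : SimpleGraph V} {s s' : Set V} {k t : ℕ} {u v w a b x y : V}

/-- `T` is a tree with vertex set `s` and at most `k + 1` leaves in `G` that has more vertices than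
every `k`-ended tree. -/
structure IsCritical (G : SimpleGraph V) (k : ℕ) (T : SimpleGraph V) (s : Set V) : Prop
    extends IsTreeOn T s where
  le : T ≤ G
  ncard_leaves_le : (leaves T).ncard ≤ k + 1
  lt_ncard : maxKEndedOrder G k < s.ncard

/-- The vertex `v` looks like an interior vertex of an end-path of `T` leading to the leaf `u`: it
is not a branch vertex, and no leaf other than `u` equals it or is joined to it in `G`. -/
structure IsQuiet (G T : SimpleGraph V) (u v : V) : Prop where
  encard_le : (T.neighborSet v).encard ≤ 2
  eq_of_mem_leaves : v ∈ leaves T → v = u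
  not_adj : ∀ ⦃w⦄, w ∈ leaves T → w ≠ u → ¬ G.Adj w v

theorem ncard_neighborSet_sup_edge (hu : u ∈ leaves T) (huv : u ≠ v) (hnuv : ¬ T.Adj u v) :
    ((T ⊔ edge u v).neighborSet u).ncard = 2 := by
  obtain ⟨w, huw, hw⟩ := hu
  have neighborSet_eq : (T ⊔ edge u v).neighborSet u = {w, v} := by
    ext y
    have : T.Adj u y ↔ y = w := ⟨hw y, fun hy ↦ hy ▸ huw⟩
    simp only [mem_neighborSet, sup_adj, edge_adj, this, Set.mem_insert_iff, Set.mem_singleton_iff]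
    grind
  rw [neighborSet_eq, Set.ncard_pair]
  rintro rfl
  exact hnuv huw

theorem encard_neighborSet_le_two_of_mem_leaves (hv : v ∈ leaves T')
    (hadj : ∀ ⦃y⦄, T.Adj v y → y ≠ a → T'.Adj v y) : (T.neighborSet v).encard ≤ 2 :=
  calc (T.neighborSet v).encard ≤ (insert a (T'.neighborSet v)).encard :=
        Set.encard_le_encard fun _ hy ↦ or_iff_not_imp_left.2 (hadj hy)
    _ ≤ (T'.neighborSet v).encard + 1 := Set.encard_insert_le ..
    _ = 2 := by rw [encard_neighborSet_of_mem_leaves hv, one_add_one_eq_two]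

theorem IsQuiet.of_leaves_eq_insert (h : IsQuiet G T' w v)
    (hleaves : leaves T' = insert w (leaves T \ {u})) (hw : w ∉ leaves T)
    (hdeg : (T.neighborSet v).encard ≤ 2) : IsQuiet G T u v := by
  have mem_leaves : ∀ {z}, z ∈ leaves T → z ≠ u → z ∈ leaves T' ∧ z ≠ w := fun hz hzu ↦
    ⟨hleaves ▸ .inr ⟨hz, hzu⟩, by rintro rfl; exact hw hz⟩
  refine ⟨hdeg, fun hv ↦ ?_, fun z hz hzu ↦
    h.not_adj (mem_leaves hz hzu).1 (mem_leaves hz hzu).2⟩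
  by_contra hvu
  exact (mem_leaves hv hvu).2 (h.eq_of_mem_leaves (mem_leaves hv hvu).1)

variable [Finite V]

namespace IsCritical

theorem ncard_leaves (h : IsCritical G k T s) : (leaves T).ncard = k + 1 := by
  refine h.ncard_leaves_le.antisymm (Nat.succ_le_of_lt ?_)
  by_contra! hle
  exact (h.ncard_le_maxKEndedOrder h.le hle).not_gt h.lt_ncard

theorem isCritical_of_leaves_subset (h : IsCritical G k T s) (hu : u ∈ leaves T)
    (h' : IsTreeOn T' s') (hle : T' ≤ G) (hs' : maxKEndedOrder G k < s'.ncard)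
    (hsub : leaves T' ⊆ insert y (leaves T \ {u})) : IsCritical G k T' s' := by
  refine ⟨h', hle, ?_, hs'⟩
  calc (leaves T').ncard ≤ (insert y (leaves T \ {u})).ncard := Set.ncard_le_ncard hsub
    _ ≤ (leaves T \ {u}).ncard + 1 := Set.ncard_insert_le ..
    _ = (leaves T).ncard := Set.ncard_sdiff_singleton_add_one hu
    _ ≤ k + 1 := h.ncard_leaves_le

theorem leaves_eq_insert (h : IsCritical G k T s) (hu : u ∈ leaves T) (h' : IsCritical G k T' s')
    (hsub : leaves T' ⊆ insert y (leaves T \ {u})) : leaves T' = insert y (leaves T \ {u}) := by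
  refine Set.eq_of_subset_of_ncard_le hsub ?_
  calc (insert y (leaves T \ {u})).ncard ≤ (leaves T \ {u}).ncard + 1 := Set.ncard_insert_le ..
    _ = (leaves T).ncard := Set.ncard_sdiff_singleton_add_one hu
    _ = (leaves T').ncard := h.ncard_leaves.trans h'.ncard_leaves.symm

/-- Otherwise replacing `ab` with `uv` would make `v` an inner vertex and create at most the leaf
`b` in exchange for `u`. -/
theorem encard_neighborSet_le_two_of_toward (h : IsCritical G k T s) (hu : u ∈ leaves T)
    (hv : v ∈ leaves T) (huv : G.Adj u v) (hnuv : ¬ T.Adj u v) (hab : T.Adj a b)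
    (hua : toward T u a = b) (hvb : toward T v b = a) : (T.neighborSet a).encard ≤ 2 := by
  by_contra! hlt
  have hus := h.leaves_subset hu
  have hvs := h.leaves_subset hv
  have htree : IsTreeOn (exchangeEdge T a b u v) s :=
    h.isTreeOn_exchangeEdge hus hvs hab (h.reachable_deleteEdges hus hab hua)
      (Sym2.eq_swap (a := b) (b := a) ▸ h.reachable_deleteEdges hvs hab.symm hvb)
  have ha' : a ∉ leaves (exchangeEdge T a b u v) := by
    obtain ⟨c, d, hac, had, hcb, hdb, hcd⟩ := exists_two_adj_ne_of_two_lt_encard hlt b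
    refine notMem_leaves_of_adj_of_adj (exchangeEdge_adj.2 (.inl ⟨hac, ?_⟩))
      (exchangeEdge_adj.2 (.inl ⟨had, ?_⟩)) hcd <;> simp [hcb, hdb, hab.ne]
  have hv' : v ∉ leaves (exchangeEdge T a b u v) := by
    obtain ⟨c, hvc, -⟩ := id hv
    have hva : v ≠ a := by
      rintro rfl
      exact hlt.not_ge ((encard_neighborSet_of_mem_leaves hv).trans_le one_le_two)
    have hvb' : v ≠ b := by rintro rfl; exact hab.ne ((toward_self T v).symm.trans hvb).symm
    refine notMem_leaves_of_adj_of_adj (exchangeEdge_adj.2 (.inl ⟨hvc, by simp [hva, hvb']⟩))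
      (exchangeEdge_adj.2 (.inr ⟨Sym2.eq_swap, huv.ne'⟩)) ?_
    rintro rfl
    exact hnuv hvc.symm
  have hsub := leaves_exchangeEdge_subset hu huv.ne hnuv (absurd · ha') (absurd · hv')
  have hcrit := h.isCritical_of_leaves_subset hu htree (exchangeEdge_le h.le huv) h.lt_ncard hsub
  exact hv' (h.leaves_eq_insert hu hcrit hsub ▸ .inr ⟨hv, huv.ne'⟩)

theorem encard_neighborSet_pathTo_le_two (h : IsCritical G k T s) (hu : u ∈ leaves T)
    (hv : v ∈ leaves T) (huv : G.Adj u v) (hnuv : ¬ T.Adj u v) {i : ℕ} (hi : pathTo T u v i ≠ v) :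
    (T.neighborSet (pathTo T u v (i + 1))).encard ≤ 2 :=
  have hus := h.leaves_subset hu
  have hvs := h.leaves_subset hv
  h.encard_neighborSet_le_two_of_toward hu hv huv hnuv (h.adj_pathTo hvs hus hi).symm
    (h.toward_start_pathTo_succ hvs hus hi) (pathTo_succ T u v i).symm

theorem subset_range_pathTo (h : IsCritical G k T s) (hu : u ∈ leaves T) (hv : v ∈ leaves T)
    (huv : G.Adj u v) (hnuv : ¬ T.Adj u v) : s ⊆ Set.range (pathTo T u v) := by
  have hus := h.leaves_subset hu
  have hvs := h.leaves_subset hv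
  refine h.subset_of_closed hus ⟨0, rfl⟩ ?_
  rintro _ ⟨i, rfl⟩ y hy
  induction i with
  | zero => exact ⟨1, eq_of_adj_of_mem_leaves hu (h.adj_pathTo (n := 0) hvs hus huv.ne) hy⟩
  | succ i ih =>
    by_cases hi : pathTo T u v i = v
    · refine ih ?_
      rwa [pathTo_succ, hi, toward_self, ← hi] at hy
    by_cases hi' : pathTo T u v (i + 1) = v
    · have hleaf : pathTo T u v (i + 1) ∈ leaves T := by rwa [hi']
      exact ⟨i, eq_of_adj_of_mem_leaves hleaf (h.adj_pathTo hvs hus hi).symm hy⟩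
    · have hmem : y ∈ T.neighborSet (pathTo T u v (i + 1)) := hy
      rw [h.neighborSet_pathTo_succ hvs hus
        (h.encard_neighborSet_pathTo_le_two hu hv huv hnuv hi) hi'] at hmem
      rcases hmem with rfl | rfl
      exacts [⟨i, rfl⟩, ⟨i + 2, rfl⟩]

theorem ncard_neighborSet_sup_edge_eq_two (h : IsCritical G k T s) (hu : u ∈ leaves T)
    (hv : v ∈ leaves T) (huv : G.Adj u v) (hnuv : ¬ T.Adj u v) (hw : w ∈ s) :
    ((T ⊔ edge u v).neighborSet w).ncard = 2 := by
  have hus := h.leaves_subset hu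
  have hvs := h.leaves_subset hv
  rcases eq_or_ne w u with rfl | hwu
  · exact ncard_neighborSet_sup_edge hu huv.ne hnuv
  rcases eq_or_ne w v with rfl | hwv
  · rw [edge_comm]
    exact ncard_neighborSet_sup_edge hv huv.ne' (hnuv ·.symm)
  have neighborSet_eq : (T ⊔ edge u v).neighborSet w = T.neighborSet w := by
    ext y
    simp [edge_adj, hwu, hwv]
  obtain ⟨_ | i, rfl⟩ := h.subset_range_pathTo hu hv huv hnuv hw
  · exact absurd rfl hwu
  · have hi : pathTo T u v i ≠ v := pathTo_ne_of_le i.le_succ hwv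
    rw [neighborSet_eq, h.neighborSet_pathTo_succ hvs hus
      (h.encard_neighborSet_pathTo_le_two hu hv huv hnuv hi) hwv,
      Set.ncard_pair (h.pathTo_add_two_ne hvs hus hi).symm]

theorem not_adj_of_mem_leaves (h : IsCritical G k T s) (hk : 1 ≤ k) (hu : u ∈ leaves T)
    (hv : v ∈ leaves T) : ¬ G.Adj u v := by
  intro huv
  by_cases hT : T.Adj u v
  · have hsub : s ⊆ {u, v} := h.subset_of_closed (h.leaves_subset hu) (.inl rfl) <| by
      rintro _ (rfl | rfl) y hy
      exacts [.inr (eq_of_adj_of_mem_leaves hu hy hT), .inl (eq_of_adj_of_mem_leaves hv hy hT.symm)]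
    have := h.ncard_le_maxKEndedOrder_of_cycle h.le hk
      (.inl ((Set.ncard_le_ncard hsub).trans (Set.ncard_pair huv.ne).le))
    exact this.not_gt h.lt_ncard
  · have hconn : IsConnectedOn (T ⊔ edge u v) s := by
      refine ⟨?_, h.nonempty, fun a b ha hb ↦ (h.reachable ha hb).mono le_sup_left⟩
      rintro a b (hab | hab)
      · exact h.mem hab
      · rcases (edge_adj ..).1 hab with ⟨⟨rfl, -⟩ | ⟨rfl, -⟩, -⟩
        exacts [h.leaves_subset hu, h.leaves_subset hv]
    have hle : T ⊔ edge u v ≤ G := sup_le h.le ((edge_le_iff _).2 (.inr huv))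
    have := hconn.ncard_le_maxKEndedOrder_of_cycle hle hk
      (.inr fun w hw ↦ h.ncard_neighborSet_sup_edge_eq_two hu hv huv hT hw)
    exact this.not_gt h.lt_ncard

theorem isQuiet_self (h : IsCritical G k T s) (hk : 1 ≤ k) (hu : u ∈ leaves T) :
    IsQuiet G T u u where
  encard_le := (encard_neighborSet_of_mem_leaves hu).trans_le one_le_two
  eq_of_mem_leaves _ := rfl
  not_adj _ hw _ := h.not_adj_of_mem_leaves hk hw hu

theorem isCritical_deleteIncidenceSet (h : IsCritical G k T s) (hu : u ∈ leaves T)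
    (hs : maxKEndedOrder G k + 1 < s.ncard) :
    IsCritical G k (T.deleteIncidenceSet u) (s \ {u}) := by
  obtain ⟨w, huw, -⟩ := id hu
  refine h.isCritical_of_leaves_subset hu (h.isTreeOn_deleteIncidenceSet hu)
    ((T.deleteIncidenceSet_le u).trans h.le) ?_ (leaves_deleteIncidenceSet_subset hu huw)
  have := Set.ncard_sdiff_singleton_add_one (h.leaves_subset hu)
  omega

/-- Deleting `u` turns its neighbour into a leaf of a critical tree, and `v` is closer to it. -/
theorem isQuiet_of_dist_le (h : IsCritical G k T s) (hk : 1 ≤ k) (hu : u ∈ leaves T) (hv : v ∈ s)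
    (ht : T.dist u v ≤ t) (hs : maxKEndedOrder G k + t < s.ncard) : IsQuiet G T u v := by
  induction t generalizing T s u with
  | zero =>
    obtain rfl := (h.reachable (h.leaves_subset hu) hv).dist_eq_zero_iff.1 (Nat.le_zero.1 ht)
    exact h.isQuiet_self hk hu
  | succ t ih =>
    rcases eq_or_ne v u with rfl | hvu
    · exact h.isQuiet_self hk hu
    have hus := h.leaves_subset hu
    obtain ⟨w, huw, hw⟩ := id hu
    have toward_eq : toward T v u = w := hw _ (h.adj_toward hv hus hvu.symm)
    have hdist := h.dist_toward_add_one hv hus hvu.symm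
    rw [toward_eq, dist_comm (u := v), dist_comm (u := v)] at hdist
    have hcrit := h.isCritical_deleteIncidenceSet hu (by omega)
    have hleaves := h.leaves_eq_insert hu hcrit (leaves_deleteIncidenceSet_subset hu huw)
    have hv' : v ∈ s \ {u} := ⟨hv, hvu⟩
    have hw' : w ∈ s \ {u} := ⟨h.mem huw.symm, huw.ne'⟩
    have hquiet : IsQuiet G (T.deleteIncidenceSet u) w v := by
      refine ih hcrit (hleaves ▸ .inl rfl) hv'
        ((h.dist_deleteIncidenceSet_le hu hv' hw').trans (by omega)) ?_
      have := Set.ncard_sdiff_singleton_add_one hus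
      omega
    have hadj : ∀ ⦃y⦄, T.Adj v y → y ≠ u → (T.deleteIncidenceSet u).Adj v y := fun y hvy hyu ↦
      deleteIncidenceSet_adj.2 ⟨hvy, hvu, hyu⟩
    refine hquiet.of_leaves_eq_insert hleaves
      (fun hwl ↦ h.not_adj_of_mem_leaves hk hu hwl (h.le huw)) ?_
    rcases eq_or_ne v w with rfl | hvw
    · exact encard_neighborSet_le_two_of_mem_leaves (hleaves.symm.subset (.inl rfl)) hadj
    · refine (Set.encard_le_encard fun y hvy ↦ hadj hvy ?_).trans hquiet.encard_le
      rintro rfl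
      exact hvw (hw v (adj_symm _ hvy))

theorem isCritical_exchangeEdge (h : IsCritical G k T s) (hu : u ∈ leaves T) (hux : G.Adj u x)
    (hxy : T.Adj x y) (hy : toward T u x = y) (hyu : y ≠ u) :
    IsCritical G k (exchangeEdge T x y u x) s ∧
      leaves (exchangeEdge T x y u x) = insert y (leaves T \ {u}) := by
  have hus := h.leaves_subset hu
  have htree : IsTreeOn (exchangeEdge T x y u x) s :=
    h.isTreeOn_exchangeEdge hus (h.mem hxy) hxy (h.reachable_deleteEdges hus hxy hy) .rfl
  have hnux : ¬ T.Adj u x := fun hT ↦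
    hyu (hy.symm.trans (h.toward_eq hus hT.symm (by rw [dist_self, dist_eq_one_iff_adj.2 hT])))
  have hx : x ∈ leaves (exchangeEdge T x y u x) → x ∈ leaves T \ {u} := by
    refine fun hxl ↦ ⟨?_, hux.ne'⟩
    by_contra hxT
    obtain ⟨z, hxz, hzy⟩ := exists_adj_ne_of_notMem_leaves hxT hxy
    refine notMem_leaves_of_adj_of_adj (exchangeEdge_adj.2 (.inl ⟨hxz, ?_⟩))
      (exchangeEdge_adj.2 (.inr ⟨Sym2.eq_swap, hux.ne'⟩)) ?_ hxl
    · simpa using ⟨hzy, fun he ↦ absurd he hxy.ne⟩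
    · rintro rfl
      exact hnux hxz.symm
  have hsub := leaves_exchangeEdge_subset hu hux.ne hnux hx hx
  have hcrit := h.isCritical_of_leaves_subset hu htree (exchangeEdge_le h.le hux) h.lt_ncard hsub
  exact ⟨hcrit, h.leaves_eq_insert hu hcrit hsub⟩

theorem isQuiet_pathTo (h : IsCritical G k T s) (hk : 1 ≤ k) (hu : u ∈ leaves T) (hux : G.Adj u x)
    (hx : x ∈ s) (hs : maxKEndedOrder G k + t < s.ncard) :
    IsQuiet G T u (pathTo T x u (t + 1)) := by
  rcases eq_or_ne (pathTo T x u (t + 1)) u with he | hne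
  · exact he.symm ▸ h.isQuiet_self hk hu
  have hus := h.leaves_subset hu
  obtain ⟨y, hy⟩ : ∃ y, pathTo T x u 1 = y := ⟨_, rfl⟩
  have hyu : y ≠ u := hy ▸ pathTo_ne_of_le (by omega) hne
  have hxy : T.Adj x y := hy ▸ h.adj_pathTo hus hx (n := 0) hux.ne'
  obtain ⟨hcrit, hleaves⟩ := h.isCritical_exchangeEdge hu hux hxy hy hyu
  have hyl : y ∈ leaves (exchangeEdge T x y u x) := hleaves.symm.subset (.inl rfl)
  have ne_start (i : ℕ) : pathTo T x u (i + 1) ≠ x := h.pathTo_succ_ne_start hus hx hux.ne'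
  have hadj : ∀ {a b}, T.Adj a b → a ≠ x → b ≠ x → (exchangeEdge T x y u x).Adj a b :=
    fun hab ha hb ↦ exchangeEdge_adj.2 (.inl ⟨hab, by simp [ha, hb]⟩)
  have hquiet : IsQuiet G (exchangeEdge T x y u x) y (pathTo T x u (t + 1)) := by
    obtain ⟨q, hq⟩ := exists_walk_length_le_of_forall_lt (n := t)
      (p := fun i ↦ pathTo T x u (i + 1)) fun i hi ↦ .inr (hadj
        (h.adj_pathTo hus hx (pathTo_ne_of_le (by omega) hne)) (ne_start i) (ne_start (i + 1)))
    subst hy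
    exact hcrit.isQuiet_of_dist_le hk hyl (h.pathTo_mem hus hx _) ((dist_le q).trans hq) hs
  refine hquiet.of_leaves_eq_insert hleaves (hy ▸ h.pathTo_succ_notMem_leaves hus hx (hy ▸ hyu)) ?_
  rcases eq_or_ne (pathTo T x u (t + 1)) y with he | hne'
  · exact encard_neighborSet_le_two_of_mem_leaves (he ▸ hyl) fun z hz ↦ hadj hz (ne_start t)
  · refine (Set.encard_le_encard fun z hz ↦ hadj hz (ne_start t) ?_).trans hquiet.encard_le
    rintro rfl
    exact (h.toward_eq_or hus hz).elim (pathTo_succ T z u (t + 1) ▸ ne_start (t + 1))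
      fun he ↦ hne' (he.symm.trans hy)

theorem mem_of_adj_leaf (h : IsCritical G k T s) (hs : maxKEndedOrder G (k + 1) ≤ s.ncard)
    (hu : u ∈ leaves T) (huv : G.Adj u v) : v ∈ s := by
  by_contra hv
  have htree := h.isTreeOn_sup_edge (h.leaves_subset hu) hv
  have hsub := leaves_sup_edge_subset hu huv.ne fun hT ↦ hv (h.mem hT.symm)
  have hcard := Set.ncard_insert_of_notMem hv
  have hcrit := h.isCritical_of_leaves_subset hu htree
    (sup_le h.le ((edge_le_iff _).2 (.inr huv))) (by have := h.lt_ncard; omega) hsub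
  have := htree.ncard_le_maxKEndedOrder hcrit.le hcrit.ncard_leaves_le
  omega

end IsCritical

theorem exists_isCritical (hk : 1 ≤ k) (hlt : maxKEndedOrder G k < maxKEndedOrder G (k + 1)) :
    ∃ T s, IsCritical G k T s ∧ s.ncard = maxKEndedOrder G (k + 1) := by
  obtain ⟨H, htree | hcycle, hH⟩ := exists_isKEndedTree_ncard_eq (Nat.zero_lt_of_lt hlt)
  · refine ⟨H.spanningCoe, H.verts, ⟨isTreeOn_spanningCoe htree.1, H.spanningCoe_le, ?_, ?_⟩, hH⟩
    · exact (endVertexCount_eq_ncard_leaves H).symm.trans_le htree.2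
    · exact hH ▸ hlt
  · have := IsKEndedTree.ncard_verts_le (.inr ⟨hk, hcycle.2⟩ : IsKEndedTree G k H)
    omega

end Critical

section Runs

variable {G T : SimpleGraph V} {s : Set V} {S : Finset V} {j j' r u u' w x x' : V} {l n n' t : ℕ}

/-- The vertices of `S` adjacent to `x` in `G` that lie behind `c` as seen from `x` in `T`. -/
noncomputable def neighborsBehind (G T : SimpleGraph V) (S : Finset V) (x c : V) : Finset V :=
  open Classical in {w ∈ S | G.Adj w x ∧ toward T w x = c}

theorem mem_neighborsBehind {c : V} :
    w ∈ neighborsBehind G T S x c ↔ w ∈ S ∧ G.Adj w x ∧ toward T w x = c := by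
  simp [neighborsBehind]

theorem neighborsBehind_subset (G T : SimpleGraph V) (S : Finset V) (x c : V) :
    neighborsBehind G T S x c ⊆ S :=
  fun _ hw ↦ (mem_neighborsBehind.1 hw).1

/-- The position of `u` in a numbering, starting from `0`, of the neighbours of `x` in `S` that lie
in the same direction from `x` as `u`. -/
noncomputable def rankBehind (G T : SimpleGraph V) (S : Finset V) (x u : V) : ℕ :=
  open Classical in (neighborsBehind G T S x (toward T u x)).toList.idxOf u

theorem rankBehind_lt (hu : u ∈ S) (hux : G.Adj u x) :
    rankBehind G T S x u < (neighborsBehind G T S x (toward T u x)).card := by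
  classical
  rw [rankBehind, ← Finset.length_toList, List.idxOf_lt_length_iff, Finset.mem_toList]
  exact mem_neighborsBehind.2 ⟨hu, hux, rfl⟩

theorem eq_of_rankBehind_eq (hu : u ∈ S) (hux : G.Adj u x) (hc : toward T u x = toward T u' x)
    (he : rankBehind G T S x u = rankBehind G T S x u') : u = u' := by
  classical
  rw [rankBehind, rankBehind, ← hc] at he
  refine (List.idxOf_inj ?_).1 he
  exact Finset.mem_toList.2 (mem_neighborsBehind.2 ⟨hu, hux, rfl⟩)

/-- The vertex `x` is a leaf of `T` or a neighbour of `S`, whereas the next `n` vertices on the path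
of `T` from `x` to `u ∈ S` are neither, and have degree two. -/
structure IsRun (G T : SimpleGraph V) (S : Finset V) (x u : V) (n : ℕ) : Prop where
  target_mem : u ∈ S
  ne_target : pathTo T x u n ≠ u
  start : x ∈ leaves T ∨ ∃ w ∈ S, G.Adj w x
  encard_le : ∀ i < n, (T.neighborSet (pathTo T x u (i + 1))).encard ≤ 2
  notMem_leaves : ∀ i < n, pathTo T x u (i + 1) ∉ leaves T
  not_adj : ∀ i < n, ∀ w ∈ S, ¬ G.Adj w (pathTo T x u (i + 1))

/-- The edge of `T` reached after the `n` inner vertices of a run. -/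
noncomputable def runEdge (T : SimpleGraph V) (x u : V) (n : ℕ) : Sym2 V :=
  s(pathTo T x u n, pathTo T x u (n + 1))

namespace IsRun

theorem runEdge_mem_edgeSet (hr : IsRun G T S x u n) (h : IsTreeOn T s) (hS : ↑S ⊆ s)
    (hx : x ∈ s) : runEdge T x u n ∈ T.edgeSet :=
  h.adj_pathTo (hS hr.target_mem) hx hr.ne_target

theorem start_eq (hr : IsRun G T S x u n) (hr' : IsRun G T S x' u' n') (h : IsTreeOn T s)
    (hS : ↑S ⊆ s) (hx : x ∈ s) (hx' : x' ∈ s) (hm : pathTo T x u n = pathTo T x' u' n')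
    (hm' : pathTo T x u (n + 1) = pathTo T x' u' (n' + 1)) :
    x = x' ∧ n = n' ∧ toward T u x = toward T u' x' := by
  wlog hle : n ≤ n' generalizing x x' u u' n n'
  · obtain ⟨hx, hn, hc⟩ := this hr' hr hx' hx hm.symm hm'.symm (by omega)
    exact ⟨hx.symm, hn.symm, hc.symm⟩
  obtain ⟨d, rfl⟩ := Nat.exists_eq_add_of_le hle
  obtain ⟨start_eq, next_eq⟩ := h.pathTo_backtrack (hS hr.target_mem) hx (hS hr'.target_mem) hx'
    hm hm' hr.encard_le hr.ne_target hr'.ne_target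
  rcases d with _ | d
  · exact ⟨start_eq, rfl, next_eq⟩
  · subst start_eq
    rcases hr.start with hleaf | ⟨w, hw, hwx⟩
    · exact absurd hleaf (hr'.notMem_leaves d (by omega))
    · exact absurd hwx (hr'.not_adj d (by omega) w hw)

theorem eq_of_runEdge_eq (hr : IsRun G T S x u n) (hr' : IsRun G T S x' u' n') (h : IsTreeOn T s)
    (hS : ↑S ⊆ s) (hx : x ∈ s) (hx' : x' ∈ s) (he : runEdge T x u n = runEdge T x' u' n')
    (hopp : pathTo T x u n = pathTo T x' u' (n' + 1) → pathTo T x u (n + 1) ≠ pathTo T x' u' n') :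
    x = x' ∧ n = n' ∧ toward T u x = toward T u' x' := by
  rcases Sym2.eq_iff.1 he with ⟨hm, hm'⟩ | ⟨hm, hm'⟩
  · exact hr.start_eq hr' h hS hx hx' hm hm'
  · exact absurd hm' (hopp hm)

end IsRun

/-- The properties of the leaves of a critical tree that the count of its edges relies on: their
neighbours in `G` belong to the tree and are not leaves, and the `l` vertices of `T` next to a leaf
`u`, as well as those following a neighbour of `u` on the way to `u`, are quiet. -/
structure HasSpacedLeaves (G T : SimpleGraph V) (s : Set V) (l : ℕ) : Prop
    extends IsTreeOn T s where
  mem_of_adj : ∀ ⦃u x⦄, u ∈ leaves T → G.Adj u x → x ∈ s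
  not_adj : ∀ ⦃u v⦄, u ∈ leaves T → v ∈ leaves T → ¬ G.Adj u v
  isQuiet_of_dist_lt : ∀ ⦃u v⦄, u ∈ leaves T → v ∈ s → T.dist u v < l → IsQuiet G T u v
  isQuiet_pathTo : ∀ ⦃u x t⦄, u ∈ leaves T → G.Adj u x → t < l →
    IsQuiet G T u (pathTo T x u (t + 1))

namespace HasSpacedLeaves

theorem toward_pathTo_of_adj (h : HasSpacedLeaves G T s l) (hu : u ∈ leaves T) (hw : w ∈ leaves T)
    (huw : u ≠ w) (hux : G.Adj u x) (he : toward T w x = toward T u x) (hn : n ≤ l) :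
    pathTo T x u n ≠ u ∧ toward T w (pathTo T x u n) = pathTo T x u (n + 1) :=
  h.toward_pathTo_eq hu hw huw (h.mem_of_adj hu hux) hux.ne' he fun _ _ ↦
    (h.isQuiet_pathTo hu hux (by omega)).encard_le

theorem not_adj_pathTo_of_adj (h : HasSpacedLeaves G T s l) (hu : u ∈ leaves T) (hw : w ∈ leaves T)
    (huw : u ≠ w) (hux : G.Adj u x) (hwx : G.Adj w x) (he : toward T w x = toward T u x)
    (hn : n < l) (hr : r ∈ leaves T) : ¬ G.Adj r (pathTo T x u (n + 1)) := by
  rcases eq_or_ne r u with rfl | hru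
  · rw [← pathTo_eq_pathTo fun i hi ↦ (h.toward_pathTo_of_adj hr hw huw hux he (by omega)).2]
    exact (h.isQuiet_pathTo hw hwx hn).not_adj hr huw
  · exact (h.isQuiet_pathTo hu hux hn).not_adj hr hru

theorem isRun_of_adj (h : HasSpacedLeaves G T s l) (hS : ↑S ⊆ leaves T) (hcard : S.card ≤ l + 1)
    (hu : u ∈ S) (hux : G.Adj u x) (hn : n < (neighborsBehind G T S x (toward T u x)).card) :
    IsRun G T S x u n := by
  have start : x ∈ leaves T ∨ ∃ w ∈ S, G.Adj w x := .inr ⟨u, hu, hux⟩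
  rcases Nat.eq_zero_or_pos n with rfl | hpos
  · exact ⟨hu, hux.ne', start, by simp, by simp, by simp⟩
  have hnl : n ≤ l := by
    have := Finset.card_le_card (neighborsBehind_subset G T S x (toward T u x))
    omega
  obtain ⟨w, hw, hwu⟩ := Finset.exists_mem_ne (Nat.lt_of_le_of_lt hpos hn) u
  obtain ⟨hwS, hwx, he⟩ := mem_neighborsBehind.1 hw
  have ne_target : pathTo T x u n ≠ u :=
    (h.toward_pathTo_of_adj (hS hu) (hS hwS) hwu.symm hux he hnl).1
  refine ⟨hu, ne_target, start, fun i hi ↦ ?_, fun i hi ↦ ?_, fun i hi r hr ↦ ?_⟩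
  · exact (h.isQuiet_pathTo (hS hu) hux (by omega)).encard_le
  · exact h.pathTo_succ_notMem_leaves (h.leaves_subset (hS hu)) (h.mem_of_adj (hS hu) hux)
      (pathTo_ne_of_le hi ne_target)
  · exact h.not_adj_pathTo_of_adj (hS hu) (hS hwS) hwu.symm hux hwx he (by omega) (hS hr)

theorem isQuiet_pathTo_of_mem_leaves (h : HasSpacedLeaves G T s l) (hj : j ∈ leaves T) (hr : r ∈ s)
    (ht : t < l) : IsQuiet G T j (pathTo T j r t) :=
  have hjs := h.leaves_subset hj
  h.isQuiet_of_dist_lt hj (h.pathTo_mem hr hjs t) ((h.dist_start_pathTo_le hr hjs t).trans_lt ht)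

theorem isRun_of_notMem (h : HasSpacedLeaves G T s l) (hS : ↑S ⊆ leaves T) (hr : r ∈ S)
    (hj : j ∈ leaves T) (hjS : j ∉ S) (ht : t < l) : IsRun G T S j r t := by
  have hrs := h.leaves_subset (hS hr)
  have ne_of_mem : ∀ {w}, w ∈ S → w ≠ j := by rintro w hw rfl; exact hjS hw
  have quiet : ∀ {i}, i ≤ t → IsQuiet G T j (pathTo T j r i) := fun hi ↦
    h.isQuiet_pathTo_of_mem_leaves hj hrs (by omega)
  refine ⟨hr, fun he ↦ ?_, .inl hj, fun i hi ↦ (quiet hi).encard_le, fun i hi hl ↦ ?_,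
    fun i hi w hw ↦ (quiet hi).not_adj (hS hw) (ne_of_mem hw)⟩
  · exact ne_of_mem hr (he ▸ (quiet le_rfl).eq_of_mem_leaves (he.symm ▸ hS hr))
  · exact h.pathTo_succ_ne_start hrs (h.leaves_subset hj) (ne_of_mem hr).symm
      ((quiet hi).eq_of_mem_leaves hl)

theorem toward_pathTo_of_notMem (h : HasSpacedLeaves G T s l) (hS : ↑S ⊆ leaves T) (hr : r ∈ S)
    (hu : u ∈ S) (hj : j ∈ leaves T) (hjS : j ∉ S) (ht : t < l) :
    toward T u (pathTo T j r t) = pathTo T j r (t + 1) := by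
  have hus := h.leaves_subset (hS hu)
  have hrs := h.leaves_subset (hS hr)
  have hjs := h.leaves_subset hj
  have hju : j ≠ u := by rintro rfl; exact hjS hu
  have hjr : j ≠ r := by rintro rfl; exact hjS hr
  rcases eq_or_ne r u with rfl | hru
  · exact (pathTo_succ T j r t).symm
  · exact (h.toward_pathTo_eq (hS hr) (hS hu) hru hjs hjr
      (eq_of_adj_of_mem_leaves hj (h.adj_toward hus hjs hju) (h.adj_toward hrs hjs hjr))
      fun i hi ↦ (h.isQuiet_pathTo_of_mem_leaves hj hrs (by omega)).encard_le).2

theorem toward_pathTo_of_mem_neighborsBehind (h : HasSpacedLeaves G T s l) (hS : ↑S ⊆ leaves T)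
    (hu : u ∈ leaves T) (hux : G.Adj u x) (hn : n ≤ l)
    (hw : w ∈ neighborsBehind G T S x (toward T u x)) :
    toward T w (pathTo T x u n) = pathTo T x u (n + 1) := by
  obtain ⟨hwS, -, he⟩ := mem_neighborsBehind.1 hw
  rcases eq_or_ne u w with rfl | huw
  · exact (pathTo_succ T x u n).symm
  · exact (h.toward_pathTo_of_adj hu (hS hwS) huw hux he hn).2

/-- All leaves counted by the two ranks lie on one side of the common edge for the first run, and on
the other side for the second. -/
theorem card_add_card_le_of_opposite (h : HasSpacedLeaves G T s l) (hS : ↑S ⊆ leaves T)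
    (hu : u ∈ leaves T) (hux : G.Adj u x) (hu' : u' ∈ leaves T) (hux' : G.Adj u' x')
    (hn : n ≤ l) (hn' : n' ≤ l) (hne : pathTo T x u n ≠ u)
    (hm : pathTo T x u n = pathTo T x' u' (n' + 1))
    (hm' : pathTo T x u (n + 1) = pathTo T x' u' n') :
    (neighborsBehind G T S x (toward T u x)).card +
      (neighborsBehind G T S x' (toward T u' x')).card ≤ S.card := by
  classical
  have hadj := h.adj_pathTo (h.leaves_subset hu) (h.mem_of_adj hu hux) hne
  rw [← Finset.card_union_of_disjoint]
  · exact Finset.card_le_card (Finset.union_subset (neighborsBehind_subset ..)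
      (neighborsBehind_subset ..))
  · refine Finset.disjoint_left.2 fun w hw hw' ↦ ?_
    refine h.toward_ne (h.leaves_subset (hS (neighborsBehind_subset _ _ _ _ _ hw))) hadj
      (h.toward_pathTo_of_mem_neighborsBehind hS hu hux hn hw) ?_
    rw [hm, hm']
    exact h.toward_pathTo_of_mem_neighborsBehind hS hu' hux' hn' hw'

theorem ne_of_adj_of_opposite (h : HasSpacedLeaves G T s l) (hu : u ∈ leaves T) (hux : G.Adj u x)
    (hu' : u' ∈ leaves T) (hux' : G.Adj u' x') (hn : n + n' < l) (hne : pathTo T x u n ≠ u)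
    (hne' : pathTo T x' u' n' ≠ u') (hm : pathTo T x u n = pathTo T x' u' (n' + 1)) :
    pathTo T x u (n + 1) ≠ pathTo T x' u' n' := by
  intro hm'
  have hus := h.leaves_subset hu
  have hxs := h.mem_of_adj hu hux
  have retrace : pathTo T x u (n + n' + 1) = x' :=
    h.pathTo_retrace hu hxs (h.leaves_subset hu') (h.mem_of_adj hu' hux') hm hm'
      (fun i hi ↦ (h.isQuiet_pathTo hu hux (by omega)).encard_le) hne'
  rcases eq_or_ne u' u with rfl | huu
  · refine h.toward_ne hus (h.adj_pathTo hus hxs hne) (pathTo_succ ..).symm ?_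
    rw [hm, hm', pathTo_succ]
  · exact (retrace ▸ h.isQuiet_pathTo hu hux hn).not_adj hu' huu hux'

theorem eq_of_runEdge_eq_of_adj (h : HasSpacedLeaves G T s l) (hS : ↑S ⊆ leaves T)
    (hcard : S.card ≤ l + 1) (hu : u ∈ S) (hux : G.Adj u x) (hu' : u' ∈ S) (hux' : G.Adj u' x')
    (he : runEdge T x u (rankBehind G T S x u) = runEdge T x' u' (rankBehind G T S x' u')) :
    u = u' ∧ x = x' := by
  have hn := rankBehind_lt (T := T) hu hux
  have hn' := rankBehind_lt (T := T) hu' hux'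
  have hle := Finset.card_le_card (neighborsBehind_subset G T S x (toward T u x))
  have hle' := Finset.card_le_card (neighborsBehind_subset G T S x' (toward T u' x'))
  have hrun := h.isRun_of_adj hS hcard hu hux hn
  have hrun' := h.isRun_of_adj hS hcard hu' hux' hn'
  obtain ⟨rfl, hrank, hc⟩ := hrun.eq_of_runEdge_eq hrun' h.toIsTreeOn (hS.trans h.leaves_subset)
    (h.mem_of_adj (hS hu) hux) (h.mem_of_adj (hS hu') hux') he fun hm hm' ↦ by
      have := h.card_add_card_le_of_opposite hS (hS hu) hux (hS hu') hux' (by omega) (by omega)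
        hrun.ne_target hm hm'
      exact h.ne_of_adj_of_opposite (hS hu) hux (hS hu') hux' (by omega) hrun.ne_target
        hrun'.ne_target hm hm'
  exact ⟨eq_of_rankBehind_eq hu hux hc hrank, rfl⟩

theorem ne_of_notMem_of_opposite (h : HasSpacedLeaves G T s l) (hS : ↑S ⊆ leaves T) (hr : r ∈ S)
    (hu : u ∈ S) (hj : j ∈ leaves T) (hjS : j ∉ S) (ht : t < l)
    (hm : pathTo T x u n = pathTo T j r (t + 1)) : pathTo T x u (n + 1) ≠ pathTo T j r t := by
  intro hm'
  refine h.toward_ne (h.leaves_subset (hS hu)) (h.adj_pathTo (h.leaves_subset (hS hr))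
    (h.leaves_subset hj) (h.isRun_of_notMem hS hr hj hjS ht).ne_target)
    (h.toward_pathTo_of_notMem hS hr hu hj hjS ht) ?_
  rw [← hm, ← hm', pathTo_succ]

theorem eq_of_runEdge_eq_of_notMem (h : HasSpacedLeaves G T s l) (hS : ↑S ⊆ leaves T) (hr : r ∈ S)
    (hj : j ∈ leaves T) (hjS : j ∉ S) (ht : t < l) (hj' : j' ∈ leaves T) (hjS' : j' ∉ S)
    (hn : n < l) (he : runEdge T j r t = runEdge T j' r n) : j = j' ∧ t = n := by
  obtain ⟨hjj, htn, -⟩ := (h.isRun_of_notMem hS hr hj hjS ht).eq_of_runEdge_eq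
    (h.isRun_of_notMem hS hr hj' hjS' hn) h.toIsTreeOn (hS.trans h.leaves_subset)
    (h.leaves_subset hj) (h.leaves_subset hj') he
    (h.ne_of_notMem_of_opposite hS hr hr hj' hjS' hn)
  exact ⟨hjj, htn⟩

theorem runEdge_ne_of_adj_of_notMem (h : HasSpacedLeaves G T s l) (hS : ↑S ⊆ leaves T)
    (hr : r ∈ S) (hu : u ∈ S) (hux : G.Adj u x) (hrun : IsRun G T S x u n)
    (hj : j ∈ leaves T) (hjS : j ∉ S) (ht : t < l) : runEdge T x u n ≠ runEdge T j r t := by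
  intro he
  obtain ⟨rfl, -, -⟩ := hrun.eq_of_runEdge_eq (h.isRun_of_notMem hS hr hj hjS ht) h.toIsTreeOn
    (hS.trans h.leaves_subset) (h.mem_of_adj (hS hu) hux) (h.leaves_subset hj) he
    (h.ne_of_notMem_of_opposite hS hr hu hj hjS ht)
  exact h.not_adj (hS hu) hj hux

end HasSpacedLeaves

section TailEdges

variable [Finite V]

/-- For all leaves `j ∉ S` of `T`, the first `l` edges on the path from `j` to `r`. -/
noncomputable def tailEdges (T : SimpleGraph V) (S : Finset V) (r : V) (l : ℕ) : Finset (Sym2 V) :=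
  open Classical in
  ((Set.toFinite (leaves T \ S)).toFinset ×ˢ Finset.range l).image fun p ↦ runEdge T p.1 r p.2

theorem mem_tailEdges {e : Sym2 V} : e ∈ tailEdges T S r l ↔
    ∃ j ∈ leaves T, j ∉ S ∧ ∃ t < l, runEdge T j r t = e := by
  simp [tailEdges, and_assoc]

namespace HasSpacedLeaves

theorem card_tailEdges (h : HasSpacedLeaves G T s l) (hS : ↑S ⊆ leaves T) (hr : r ∈ S) :
    (tailEdges T S r l).card = l * ((leaves T).ncard - S.card) := by
  classical
  rw [tailEdges, Finset.card_image_of_injOn, Finset.card_product, Finset.card_range,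
    ← Set.ncard_eq_toFinset_card, Set.ncard_sdiff hS, Set.ncard_coe_finset, mul_comm]
  rintro ⟨j, t⟩ hp ⟨j', t'⟩ hp' he
  simp only [Finset.coe_product, Set.Finite.coe_toFinset, Finset.coe_range, Set.mem_prod,
    Set.mem_sdiff, Finset.mem_coe, Set.mem_Iio] at hp hp'
  obtain ⟨rfl, rfl⟩ :=
    h.eq_of_runEdge_eq_of_notMem hS hr hp.1.1 hp.1.2 hp.2 hp'.1.1 hp'.1.2 hp'.2 he
  rfl

theorem tailEdges_subset (h : HasSpacedLeaves G T s l) (hS : ↑S ⊆ leaves T) (hr : r ∈ S) :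
    ↑(tailEdges T S r l) ⊆ T.edgeSet := by
  intro e he
  obtain ⟨j, hj, hjS, t, ht, rfl⟩ := mem_tailEdges.1 he
  exact (h.isRun_of_notMem hS hr hj hjS ht).runEdge_mem_edgeSet h.toIsTreeOn
    (hS.trans h.leaves_subset) (h.leaves_subset hj)

end HasSpacedLeaves

end TailEdges

section NeighborEdges

variable [Fintype V] [DecidableRel G.Adj]

/-- For all `u ∈ S` and all neighbours `x` of `u` in `G`, the edge ending the run from `x` to `u` of
length the rank of `u`. -/
noncomputable def neighborEdges (G : SimpleGraph V) [DecidableRel G.Adj] (T : SimpleGraph V)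
    (S : Finset V) : Finset (Sym2 V) :=
  open Classical in
  (S.sigma fun u ↦ G.neighborFinset u).image fun p ↦
    runEdge T p.2 p.1 (rankBehind G T S p.2 p.1)

theorem mem_neighborEdges {e : Sym2 V} : e ∈ neighborEdges G T S ↔
    ∃ u ∈ S, ∃ x, G.Adj u x ∧ runEdge T x u (rankBehind G T S x u) = e := by
  simp [neighborEdges, and_assoc]

namespace HasSpacedLeaves

theorem card_neighborEdges (h : HasSpacedLeaves G T s l) (hS : ↑S ⊆ leaves T)
    (hcard : S.card ≤ l + 1) : (neighborEdges G T S).card = ∑ u ∈ S, G.degree u := by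
  classical
  refine (Finset.card_image_of_injOn ?_).trans (Finset.card_sigma ..)
  rintro ⟨u, x⟩ hp ⟨u', x'⟩ hp' he
  simp only [Finset.mem_coe, Finset.mem_sigma, mem_neighborFinset] at hp hp'
  obtain ⟨rfl, rfl⟩ := h.eq_of_runEdge_eq_of_adj hS hcard hp.1 hp.2 hp'.1 hp'.2 he
  rfl

theorem neighborEdges_subset (h : HasSpacedLeaves G T s l) (hS : ↑S ⊆ leaves T)
    (hcard : S.card ≤ l + 1) : ↑(neighborEdges G T S) ⊆ T.edgeSet := by
  intro e he
  obtain ⟨u, hu, x, hux, rfl⟩ := mem_neighborEdges.1 he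
  exact (h.isRun_of_adj hS hcard hu hux (rankBehind_lt hu hux)).runEdge_mem_edgeSet h.toIsTreeOn
    (hS.trans h.leaves_subset) (h.mem_of_adj (hS hu) hux)

theorem disjoint_neighborEdges_tailEdges (h : HasSpacedLeaves G T s l) (hS : ↑S ⊆ leaves T)
    (hcard : S.card ≤ l + 1) (hr : r ∈ S) :
    Disjoint (neighborEdges G T S) (tailEdges T S r l) := by
  refine Finset.disjoint_left.2 fun e he he' ↦ ?_
  obtain ⟨u, hu, x, hux, rfl⟩ := mem_neighborEdges.1 he
  obtain ⟨j, hj, hjS, t, ht, he⟩ := mem_tailEdges.1 he'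
  have hrun := h.isRun_of_adj hS hcard hu hux (rankBehind_lt hu hux)
  exact h.runEdge_ne_of_adj_of_notMem hS hr hu hux hrun hj hjS ht he.symm

theorem sum_degree_add_le (h : HasSpacedLeaves G T s l) (hS : ↑S ⊆ leaves T)
    (hcard : S.card ≤ l + 1) (hr : r ∈ S) :
    ∑ u ∈ S, G.degree u + l * ((leaves T).ncard - S.card) + 1 ≤ s.ncard := by
  classical
  calc ∑ u ∈ S, G.degree u + l * ((leaves T).ncard - S.card) + 1
      = (neighborEdges G T S ∪ tailEdges T S r l).card + 1 := by
        rw [Finset.card_union_of_disjoint (h.disjoint_neighborEdges_tailEdges hS hcard hr),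
          h.card_neighborEdges hS hcard, h.card_tailEdges hS hr]
    _ = (neighborEdges G T S ∪ tailEdges T S r l : Set (Sym2 V)).ncard + 1 := by
        rw [← Finset.coe_union, Set.ncard_coe_finset]
    _ ≤ T.edgeSet.ncard + 1 := Nat.add_le_add_right
        (Set.ncard_le_ncard (Set.union_subset (h.neighborEdges_subset hS hcard)
          (h.tailEdges_subset hS hr))) 1
    _ ≤ s.ncard := h.ncard_edgeSet_add_one_le (Set.toFinite s)

end HasSpacedLeaves

end NeighborEdges

end Runs

theorem IsCritical.hasSpacedLeaves [Finite V] {G T : SimpleGraph V} {s : Set V} {k l : ℕ}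
    (h : IsCritical G k T s) (hk : 1 ≤ k) (hs : maxKEndedOrder G (k + 1) ≤ s.ncard)
    (hl : maxKEndedOrder G k + l ≤ s.ncard) : HasSpacedLeaves G T s l where
  toIsTreeOn := h.toIsTreeOn
  mem_of_adj _ _ hu hux := h.mem_of_adj_leaf hs hu hux
  not_adj _ _ hu hv := h.not_adj_of_mem_leaves hk hu hv
  isQuiet_of_dist_lt _ _ hu hv ht := h.isQuiet_of_dist_le hk hu hv le_rfl (by omega)
  isQuiet_pathTo _ _ _ hu hux ht :=
    h.isQuiet_pathTo hk hu hux (h.mem_of_adj_leaf hs hu hux) (by omega)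

theorem minDegreeSum_le [Fintype V] {G : SimpleGraph V} [DecidableRel G.Adj] {S : Finset V}
    (hS : IsIndSet G ↑S) : minDegreeSum G S.card ≤ ((∑ u ∈ S, G.degree u : ℕ) : ℕ∞) := by
  push_cast
  exact iInf₂_le S ⟨rfl, hS⟩

theorem corollary3_general [Fintype V] (G : SimpleGraph V) [DecidableRel G.Adj] (k l m : ℕ)
    (hk : 1 ≤ k) (hl : 1 ≤ l) (hm : 1 ≤ m) (hmk : m ≤ k + 1) (hml : m ≤ l + 1)
    (h : (Fintype.card V : ℕ∞) ≤ minDegreeSum G m + ((l * (k + 1 - m) : ℕ) : ℕ∞)) :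
    maxKEndedOrder G k + l ≥ maxKEndedOrder G (k + 1) + 1 := by
  by_contra! hlt
  obtain ⟨T, s, hT, hs⟩ := exists_isCritical (G := G) hk (by omega)
  obtain ⟨S', hS, hcard⟩ := Set.exists_subset_card_eq (hT.ncard_leaves ▸ hmk)
  obtain ⟨S, rfl⟩ := (Set.toFinite S').exists_finset_coe
  rw [Set.ncard_coe_finset] at hcard
  subst hcard
  obtain ⟨r, hr⟩ : S.Nonempty := Finset.card_pos.1 hm
  have spaced : HasSpacedLeaves G T s l := hT.hasSpacedLeaves hk hs.ge (by omega)
  have count := spaced.sum_degree_add_le hS hml hr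
  rw [hT.ncard_leaves] at count
  have le_card : s.ncard ≤ Fintype.card V := Nat.card_eq_fintype_card (α := V) ▸ Set.ncard_le_card s
  have card_le : (Fintype.card V : ℕ∞) ≤ ↑(∑ u ∈ S, G.degree u) + ↑(l * (k + 1 - S.card)) :=
    h.trans <| add_le_add_left
      (minDegreeSum_le fun u hu v hv ↦ hT.not_adj_of_mem_leaves hk (hS hu) (hS hv)) _
  norm_cast at card_le
  omega

/-- **Corollary 3.** If `G` is connected of order `n`, `k, λ, m` are positive
integers with `m ≤ min{k, λ} + 1`, and `σ_m ≥ n - λ(k - m + 1)`, then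
`t_k ≥ t_{k+1} - λ + 1`. -/
theorem corollary3 [Fintype V] (G : SimpleGraph V) [DecidableRel G.Adj]
    (hG : G.Connected) (k l m : ℕ) (hk : 1 ≤ k) (hl : 1 ≤ l) (hm : 1 ≤ m)
    (hmk : m ≤ k + 1) (hml : m ≤ l + 1)
    (h : (Fintype.card V : ℕ∞) ≤
      minDegreeSum G m + ((l * (k + 1 - m) : ℕ) : ℕ∞)) :
    maxKEndedOrder G k + l ≥ maxKEndedOrder G (k + 1) + 1 :=
  corollary3_general G k l m hk hl hm hmk hml h
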